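/- Let G be a finite simple graph with n vertices, let r ≥ 2 be an integer, let t, x_1, …, x_{r−1} be complex numbers, and let C be a fixed cycle in G with connected components C_1, …, C_l. Then Σ_f Π_{v ∈ V} w_v(f) = t^{n−|C|} · Π_{j=1}^{l} p_{|C_j|}(x_1, …, x_{r−1}), where the sum runs over all f : E → Fin r such that f(e) = r for every edge e not in C and f(e) ≠ r for every edge e in C. -/

import Mathlib

open scoped Classical

/-- The finset of edges of `G` incident to the vertex `v`. -/
noncomputable def incidentEdges {V : Type*} [Fintype V] [DecidableEq V]
    (G : SimpleGraph V) (v : V) : Finset G.edgeSet :=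
  Finset.univ.filter (fun e => v ∈ (e : Sym2 V))

/-- The local weight `w_v(f)`: colors are the elements of `Fin (m+1)`, the last color
playing the role of the color `r = m+1`.  The weight is `t` if every edge incident to `v`
has the last color (in particular if `v` is isolated), `x i` if the multiset of colors of
the edges incident to `v` consists of exactly two copies of the color `i` (with
`i ∈ {1, …, r-1}`) together with `deg v - 2` copies of the last color, and `0` otherwise. -/
noncomputable def localWeight {V : Type*} [Fintype V] [DecidableEq V]
    (G : SimpleGraph V) {m : ℕ} (t : ℂ) (x : Fin m → ℂ)
    (f : G.edgeSet → Fin (m + 1)) (v : V) : ℂ :=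
  if ∀ e ∈ incidentEdges G v, f e = Fin.last m then t
  else ∑ i : Fin m,
    if ((incidentEdges G v).filter (fun e => f e = i.castSucc)).card = 2 ∧
        (∀ e ∈ incidentEdges G v, f e = i.castSucc ∨ f e = Fin.last m)
    then x i else 0

/-- A (multi)cycle in `G`: a set of edges such that every vertex incident to an edge of
the set is incident to exactly two edges of the set.  It need not be connected. -/
def IsMultiCycle {V : Type*} [Fintype V] [DecidableEq V]
    (G : SimpleGraph V) (C : Finset G.edgeSet) : Prop :=
  ∀ v : V, (∃ e ∈ C, v ∈ (e : Sym2 V)) →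
    (C.filter (fun e => v ∈ (e : Sym2 V))).card = 2

/-- The graph on `V` whose edges are the edges of `C`. -/
def cycleGraph {V : Type*} [Fintype V] [DecidableEq V]
    (G : SimpleGraph V) (C : Finset G.edgeSet) : SimpleGraph V :=
  SimpleGraph.fromEdgeSet (↑(C.image (fun e => (e : Sym2 V))))

/-- The number of edges of `C` lying in the connected component `K` of `cycleGraph G C`. -/
noncomputable def componentEdgeCount {V : Type*} [Fintype V] [DecidableEq V]
    (G : SimpleGraph V) (C : Finset G.edgeSet)
    (K : (cycleGraph G C).ConnectedComponent) : ℕ :=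
  (C.filter (fun e => ∀ v ∈ (e : Sym2 V),
    (cycleGraph G C).connectedComponentMk v = K)).card

/-- The type of the cycle `C`: the multiset recording the numbers of edges of the
connected components of `C`. -/
noncomputable def cycleType {V : Type*} [Fintype V] [DecidableEq V]
    (G : SimpleGraph V) (C : Finset G.edgeSet) : Multiset ℕ :=
  Multiset.filter (· ≠ 0)
    ((Finset.univ : Finset (cycleGraph G C).ConnectedComponent).val.map
      (componentEdgeCount G C))

/-!
If `v` lies on `C`, exactly two edges at `v` avoid the last color, so `w_v(f) ≠ 0` forces these two
to have the same color; walking along a component of `C`, all its edges do. The colorings that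
contribute are thus the assignments `g` of a color to each component. A disjoint union of cycles has
as many vertices as edges, in total and in each component, so `g` contributes
`t ^ (n - |C|) * ∏ K, x (g K) ^ |K|`, and the sum over `g` is an expanded product of power sums.
-/

section

open Finset

-- `IsMultiCycle`, `cycleGraph` and `componentEdgeCount` turn `C` into a finset of `Sym2 V` through
-- a coercion that elaborates to a bind in the `Finset` monad.
theorem finset_bind_pure_coe {α : Type*} {s : Set α} (C : Finset s) :
    (do let a ← C; pure (a : α) : Finset α) = C.map (Function.Embedding.subtype _) := by
  ext a
  simp

variable {V : Type*} [Fintype V] {G : SimpleGraph V} {C : Finset G.edgeSet}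

/-- The set of vertices of the cycle `C`: those incident to an edge of `C`. -/
noncomputable def coveredVertices (C : Finset G.edgeSet) : Finset V :=
  {v | ∃ e ∈ C, v ∈ e.1}

theorem mem_coveredVertices {v : V} : v ∈ coveredVertices C ↔ ∃ e ∈ C, v ∈ e.1 := by
  simp [coveredVertices]

variable [DecidableEq V]

theorem mem_incidentEdges {e : G.edgeSet} {v : V} :
    e ∈ incidentEdges G v ↔ v ∈ e.1 := by
  simp [incidentEdges]

theorem isMultiCycle_iff :
    IsMultiCycle G C ↔ ∀ v ∈ coveredVertices C, #{e ∈ C | v ∈ e.1} = 2 := by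
  simp only [IsMultiCycle, mem_coveredVertices, finset_bind_pure_coe, filter_map, card_map]
  rfl

theorem cycleGraph_adj {u v : V} : (cycleGraph G C).Adj u v ↔ ∃ e ∈ C, e.1 = s(u, v) := by
  have ne_of_edge : (∃ e ∈ C, e.1 = s(u, v)) → u ≠ v := by
    rintro ⟨e, -, he⟩
    exact G.ne_of_adj (he ▸ e.2 : s(u, v) ∈ G.edgeSet)
  rw [cycleGraph, SimpleGraph.fromEdgeSet_adj, finset_bind_pure_coe,
    ← and_iff_left_of_imp ne_of_edge]
  simp

theorem IsMultiCycle.card_coveredVertices (hC : IsMultiCycle G C) : #(coveredVertices C) = #C := by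
  refine Nat.eq_of_mul_eq_mul_right two_pos
    (card_mul_eq_card_mul (fun v (e : G.edgeSet) => v ∈ e.1) (isMultiCycle_iff.1 hC)
      fun e he => ?_)
  rw [← Sym2.card_toFinset_of_not_isDiag e.1 (G.not_isDiag_of_mem_edgeSet e.2)]
  congr 1
  ext v
  simpa [mem_coveredVertices] using fun hv => ⟨e.1, ⟨e.2, he⟩, hv⟩

theorem connectedComponentMk_eq_of_mem {e : G.edgeSet} (he : e ∈ C) {u v : V}
    (hu : u ∈ e.1) (hv : v ∈ e.1) :
    (cycleGraph G C).connectedComponentMk u = (cycleGraph G C).connectedComponentMk v := by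
  obtain rfl | huv := eq_or_ne u v
  · rfl
  · have adj : (cycleGraph G C).Adj u v :=
      cycleGraph_adj.2 ⟨e, he, (Sym2.mem_and_mem_iff huv).1 ⟨hu, hv⟩⟩
    exact SimpleGraph.ConnectedComponent.sound adj.reachable

theorem eq_of_reachable_cycleGraph {α : Type*} {f : G.edgeSet → α}
    (hf : ∀ v : V, ∀ e ∈ C, ∀ e' ∈ C, v ∈ e.1 → v ∈ e'.1 → f e = f e') {u v : V}
    (huv : (cycleGraph G C).Reachable u v) {e e' : G.edgeSet} (he : e ∈ C) (he' : e' ∈ C)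
    (hu : u ∈ e.1) (hv : v ∈ e'.1) : f e = f e' := by
  obtain ⟨p⟩ := huv
  induction p generalizing e with
  | nil => exact hf _ e he e' he' hu hv
  | cons adj _ ih =>
    obtain ⟨d, hd, hd_eq⟩ := cycleGraph_adj.1 adj
    exact (hf _ e he d hd hu (by simp [hd_eq])).trans (ih hd (by simp [hd_eq]) hv)

/-- The edge set of the connected component `K` of the cycle `C`; it is empty when `K` is a vertex
off `C`. -/
noncomputable def componentEdges (C : Finset G.edgeSet)
    (K : (cycleGraph G C).ConnectedComponent) : Finset G.edgeSet :=
  {e ∈ C | ∀ v ∈ e.1, (cycleGraph G C).connectedComponentMk v = K}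

theorem card_componentEdges (K : (cycleGraph G C).ConnectedComponent) :
    #(componentEdges C K) = componentEdgeCount G C K := by
  rw [componentEdgeCount, finset_bind_pure_coe, filter_map, card_map]
  rfl

theorem mem_componentEdges_iff_of_mem {e : G.edgeSet} {v : V} (hv : v ∈ e.1)
    {K : (cycleGraph G C).ConnectedComponent} :
    e ∈ componentEdges C K ↔ e ∈ C ∧ (cycleGraph G C).connectedComponentMk v = K := by
  refine mem_filter.trans (and_congr_right fun he => ⟨fun h => h v hv, ?_⟩)
  rintro rfl u hu
  exact connectedComponentMk_eq_of_mem he hu hv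

theorem mem_coveredVertices_componentEdges {v : V} {K : (cycleGraph G C).ConnectedComponent} :
    v ∈ coveredVertices (componentEdges C K) ↔
      v ∈ coveredVertices C ∧ (cycleGraph G C).connectedComponentMk v = K := by
  simp only [mem_coveredVertices]
  constructor
  · rintro ⟨e, he, hv⟩
    obtain ⟨heC, hvK⟩ := (mem_componentEdges_iff_of_mem hv).1 he
    exact ⟨⟨e, heC, hv⟩, hvK⟩
  · rintro ⟨⟨e, heC, hv⟩, hvK⟩
    exact ⟨e, (mem_componentEdges_iff_of_mem hv).2 ⟨heC, hvK⟩, hv⟩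

theorem IsMultiCycle.componentEdges (hC : IsMultiCycle G C)
    (K : (cycleGraph G C).ConnectedComponent) : IsMultiCycle G (componentEdges C K) := by
  refine isMultiCycle_iff.2 fun v hv => ?_
  obtain ⟨hvC, hvK⟩ := mem_coveredVertices_componentEdges.1 hv
  rw [← isMultiCycle_iff.1 hC v hvC]
  congr 1
  ext e
  simp only [mem_filter]
  exact and_congr_left fun hve => by simp [mem_componentEdges_iff_of_mem hve, hvK]

/-- The connected components of the cycle `C`: those components of `cycleGraph G C` that contain an
edge, the others being the isolated vertices off `C`. -/
abbrev CycleComponent (C : Finset G.edgeSet) : Type _ :=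
  {K : (cycleGraph G C).ConnectedComponent // componentEdgeCount G C K ≠ 0}

theorem prod_map_cycleType {M : Type*} [CommMonoid M] (F : ℕ → M) :
    ((cycleType G C).map F).prod = ∏ K : CycleComponent C, F (componentEdgeCount G C K) := by
  rw [cycleType, Multiset.filter_map, Multiset.map_map]
  exact prod_subtype (univ.filter fun K => componentEdgeCount G C K ≠ 0) (by simp)
    fun K => F (componentEdgeCount G C K)

/-- The component of the cycle `C` through a vertex of `C`. -/
def vertexComponent (v : coveredVertices C) : CycleComponent C :=
  ⟨(cycleGraph G C).connectedComponentMk v, by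
    obtain ⟨e, he, hv⟩ := mem_coveredVertices.1 v.2
    rw [← card_componentEdges]
    exact card_ne_zero_of_mem ((mem_componentEdges_iff_of_mem hv).2 ⟨he, rfl⟩)⟩

theorem card_filter_vertexComponent_eq (hC : IsMultiCycle G C) (K : CycleComponent C) :
    #{v : coveredVertices C | vertexComponent v = K} = componentEdgeCount G C K := by
  rw [← card_componentEdges, ← (hC.componentEdges K).card_coveredVertices,
    ← card_map (Function.Embedding.subtype _)]
  congr 1
  ext v
  simp [mem_coveredVertices_componentEdges, vertexComponent, Subtype.ext_iff, and_comm]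

theorem prod_vertexComponent (hC : IsMultiCycle G C) {M : Type*} [CommMonoid M]
    (y : CycleComponent C → M) :
    ∏ v : coveredVertices C, y (vertexComponent v) = ∏ K, y K ^ componentEdgeCount G C K := by
  simp only [← prod_fiberwise' univ vertexComponent y, prod_const,
    card_filter_vertexComponent_eq hC]

/-- The component of the cycle `C` containing an edge of `C`, read off at an arbitrary endpoint. -/
noncomputable def edgeComponent (e : C) : CycleComponent C :=
  vertexComponent ⟨(e.1.1).out.1, mem_coveredVertices.2 ⟨e, e.2, Sym2.out_fst_mem _⟩⟩

theorem edgeComponent_eq_vertexComponent {e : C} {v : coveredVertices C} (hv : v.1 ∈ e.1.1) :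
    edgeComponent e = vertexComponent v :=
  Subtype.ext (connectedComponentMk_eq_of_mem e.2 (Sym2.out_fst_mem _) hv)

theorem edgeComponent_surjective : Function.Surjective (edgeComponent (C := C)) := by
  rintro ⟨K, hK⟩
  obtain ⟨e, he⟩ := card_ne_zero.1 (card_componentEdges K ▸ hK)
  obtain ⟨heC, hK_eq⟩ := (mem_componentEdges_iff_of_mem (Sym2.out_fst_mem e.1)).1 he
  exact ⟨⟨e, heC⟩, Subtype.ext hK_eq⟩

section Weights

variable {m : ℕ} {t : ℂ} {x : Fin m → ℂ} {f : G.edgeSet → Fin (m + 1)} {v : V}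

theorem localWeight_of_notMem_coveredVertices (hf : ∀ e, e ∈ C ↔ f e ≠ Fin.last m)
    (hv : v ∉ coveredVertices C) : localWeight G t x f v = t :=
  if_pos fun e he => not_not.1 fun hfe =>
    hv (mem_coveredVertices.2 ⟨e, (hf e).2 hfe, mem_incidentEdges.1 he⟩)

theorem localWeight_of_mem_coveredVertices (hf : ∀ e, e ∈ C ↔ f e ≠ Fin.last m)
    (hv : v ∈ coveredVertices C) :
    localWeight G t x f v = ∑ i : Fin m,
      if #{e ∈ incidentEdges G v | f e = i.castSucc} = 2 ∧
        ∀ e ∈ incidentEdges G v, f e = i.castSucc ∨ f e = Fin.last m then x i else 0 := by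
  obtain ⟨e, he, hev⟩ := mem_coveredVertices.1 hv
  exact if_neg fun h => (hf e).1 he (h e (mem_incidentEdges.2 hev))

theorem localWeight_of_forall_eq_castSucc (hC : IsMultiCycle G C)
    (hf : ∀ e, e ∈ C ↔ f e ≠ Fin.last m) (hv : v ∈ coveredVertices C) {i : Fin m}
    (hi : ∀ e ∈ C, v ∈ e.1 → f e = i.castSucc) : localWeight G t x f v = x i := by
  rw [localWeight_of_mem_coveredVertices hf hv, sum_eq_single_of_mem i (mem_univ i), if_pos]
  · refine ⟨?_, fun e he => ?_⟩
    · rw [← isMultiCycle_iff.1 hC v hv]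
      congr 1
      ext e
      simp only [mem_filter, mem_incidentEdges]
      exact ⟨fun ⟨hev, hfe⟩ => ⟨(hf e).2 (hfe ▸ i.castSucc_ne_last), hev⟩,
        fun ⟨he, hev⟩ => ⟨hev, hi e he hev⟩⟩
    · by_cases heC : e ∈ C
      · exact .inl (hi e heC (mem_incidentEdges.1 he))
      · exact .inr (not_not.1 (mt (hf e).2 heC))
  · rintro j - hji
    refine if_neg fun ⟨_, hj⟩ => hji ?_
    obtain ⟨e, he, hev⟩ := mem_coveredVertices.1 hv
    have hfe := (hj e (mem_incidentEdges.2 hev)).resolve_right ((hf e).1 he)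
    exact Fin.castSucc_injective m (hfe.symm.trans (hi e he hev))

theorem eq_of_localWeight_ne_zero (hf : ∀ e, e ∈ C ↔ f e ≠ Fin.last m)
    (hw : localWeight G t x f v ≠ 0) {e e' : G.edgeSet} (he : e ∈ C) (he' : e' ∈ C)
    (hv : v ∈ e.1) (hv' : v ∈ e'.1) : f e = f e' := by
  rw [localWeight_of_mem_coveredVertices hf (mem_coveredVertices.2 ⟨e, he, hv⟩)] at hw
  obtain ⟨i, -, hi⟩ := exists_ne_zero_of_sum_ne_zero hw
  have color_eq {d : G.edgeSet} (hd : d ∈ C) (hvd : v ∈ d.1) : f d = i.castSucc :=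
    ((ite_ne_right_iff.1 hi).1.2 d (mem_incidentEdges.2 hvd)).resolve_right ((hf d).1 hd)
  rw [color_eq he hv, color_eq he' hv']

end Weights

variable {m : ℕ}

/-- The coloring that gives every edge of `C` the color assigned by `g` to its component, and every
other edge the last color. -/
noncomputable def componentColoring (g : CycleComponent C → Fin m) (e : G.edgeSet) : Fin (m + 1) :=
  if he : e ∈ C then (g (edgeComponent ⟨e, he⟩)).castSucc else Fin.last m

theorem componentColoring_of_mem (g : CycleComponent C → Fin m) {e : G.edgeSet} (he : e ∈ C) :
    componentColoring g e = (g (edgeComponent ⟨e, he⟩)).castSucc :=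
  dif_pos he

theorem mem_iff_componentColoring_ne_last (g : CycleComponent C → Fin m) (e : G.edgeSet) :
    e ∈ C ↔ componentColoring g e ≠ Fin.last m := by
  by_cases he : e ∈ C <;> simp [componentColoring, he]

theorem componentColoring_injective :
    Function.Injective (componentColoring : (CycleComponent C → Fin m) → _) := by
  intro g g' h
  funext K
  obtain ⟨⟨e, he⟩, rfl⟩ := edgeComponent_surjective K
  have color_eq := congrFun h e
  rw [componentColoring_of_mem g he, componentColoring_of_mem g' he] at color_eq
  exact Fin.castSucc_injective m color_eq

theorem prod_localWeight_componentColoring (hC : IsMultiCycle G C) (t : ℂ) (x : Fin m → ℂ)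
    (g : CycleComponent C → Fin m) :
    ∏ v, localWeight G t x (componentColoring g) v =
      t ^ (Fintype.card V - #C) * ∏ K, x (g K) ^ componentEdgeCount G C K := by
  have hg := mem_iff_componentColoring_ne_last g
  have prod_off : ∏ v ∈ (coveredVertices C)ᶜ, localWeight G t x (componentColoring g) v =
      t ^ (Fintype.card V - #C) := by
    rw [← hC.card_coveredVertices, ← card_compl]
    exact prod_eq_pow_card fun v hv =>
      localWeight_of_notMem_coveredVertices hg (mem_compl.1 hv)
  have prod_on : ∏ v ∈ coveredVertices C, localWeight G t x (componentColoring g) v =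
      ∏ K, x (g K) ^ componentEdgeCount G C K := by
    rw [← prod_vertexComponent hC fun K => x (g K), ← prod_coe_sort]
    refine prod_congr rfl fun v _ => localWeight_of_forall_eq_castSucc hC hg v.2 fun e he hev => ?_
    rw [componentColoring_of_mem g he, edgeComponent_eq_vertexComponent hev]
  rw [← prod_compl_mul_prod (coveredVertices C), prod_off, prod_on]

theorem exists_componentColoring_eq {f : G.edgeSet → Fin (m + 1)}
    (hf : ∀ e, e ∈ C ↔ f e ≠ Fin.last m)
    (hf_local : ∀ v : V, ∀ e ∈ C, ∀ e' ∈ C, v ∈ e.1 → v ∈ e'.1 → f e = f e') :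
    ∃ g : CycleComponent C → Fin m, componentColoring g = f := by
  have eq_of_edgeComponent_eq {e e' : C} (h : edgeComponent e = edgeComponent e') : f e = f e' :=
    eq_of_reachable_cycleGraph hf_local
      (SimpleGraph.ConnectedComponent.exact (congrArg Subtype.val h)) e.2 e'.2
      (Sym2.out_fst_mem _) (Sym2.out_fst_mem _)
  choose edgeIn edgeIn_spec using edgeComponent_surjective (C := C)
  refine ⟨fun K => (f (edgeIn K)).castPred ((hf _).1 (edgeIn K).2), funext fun e => ?_⟩
  by_cases he : e ∈ C
  · rw [componentColoring_of_mem _ he, Fin.castSucc_castPred]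
    exact eq_of_edgeComponent_eq (edgeIn_spec _)
  · rw [componentColoring, dif_neg he, not_not.1 (mt (hf e).2 he)]

end

/-- For a fixed cycle `C` in `G`, the partial state sum over the colorings
`f : E → Fin r` (with `r = m + 1 ≥ 2` colors) that give the last color exactly to the
edges not in `C` equals `t^{n-|C|} Π_j p_{|C_j|}(x_1, …, x_{r-1})`, the product running
over the connected components `C_j` of `C`. -/
theorem partial_state_sum_over_cycle
    {V : Type*} [Fintype V] [DecidableEq V] (G : SimpleGraph V)
    (m : ℕ) (hm : 1 ≤ m) (t : ℂ) (x : Fin m → ℂ)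
    (C : Finset G.edgeSet) (hC : IsMultiCycle G C) :
    (∑ f ∈ Finset.univ.filter (fun f : G.edgeSet → Fin (m + 1) =>
        ∀ e : G.edgeSet, e ∈ C ↔ f e ≠ Fin.last m),
      ∏ v : V, localWeight G t x f v) =
    t ^ (Fintype.card V - C.card) *
      ((cycleType G C).map (fun k => ∑ i : Fin m, x i ^ k)).prod := by
  have prod_powerSums : ((cycleType G C).map fun k => ∑ i, x i ^ k).prod =
      ∑ g : CycleComponent C → Fin m, ∏ K, x (g K) ^ componentEdgeCount G C K := by
    rw [prod_map_cycleType, Finset.prod_univ_sum, Fintype.piFinset_univ]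
  rw [prod_powerSums, Finset.mul_sum]
  refine (Finset.sum_of_injOn componentColoring componentColoring_injective.injOn ?_ ?_ ?_).symm
  · intro g _
    simpa using mem_iff_componentColoring_ne_last g
  · intro f hf hf_range
    have hf_supp := (Finset.mem_filter.1 hf).2
    by_contra h_prod
    have hw := Finset.prod_ne_zero_iff.1 h_prod
    obtain ⟨g, rfl⟩ := exists_componentColoring_eq hf_supp fun v _ he _ he' =>
      eq_of_localWeight_ne_zero hf_supp (hw v (Finset.mem_univ v)) he he'
    exact hf_range (Set.mem_image_of_mem _ (Finset.mem_coe.2 (Finset.mem_univ g)))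
  · exact fun g _ => (prod_localWeight_componentColoring hC t x g).symm
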